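/- Let A₁, …, A_m ⊂ ℝⁿ be symmetric convex Borel sets. Then γ_n(⋂_{j=1}^m A_j) ≥ ∏_{j=1}^m γ_n(A_j), where γ_n is the standard Gaussian measure. -/

import Mathlib

open MeasureTheory Real Set

/-- The standard Gaussian measure on `ℝⁿ`. -/
noncomputable def stdGaussian (n : ℕ) : Measure (EuclideanSpace ℝ (Fin n)) :=
  volume.withDensity fun x => ENNReal.ofReal ((2 * π) ^ (-(n : ℝ) / 2) * Real.exp (-‖x‖ ^ 2 / 2))

/-
By induction it suffices to treat two sets, and since a convex set has null boundary they may be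
taken closed. By the bipolar theorem a closed symmetric convex set is a countable intersection of
slabs `{x | |φ x| ≤ 1}`, so by continuity of the measure only finite families of slabs remain. These
are defined by the coordinates of two linear images `V x` and `W x` of a standard Gaussian vector
`x`. Interpolate linearly, with `t ∈ [0, 1]`, from the block diagonal covariance matrix, for which
the two blocks are independent, to the joint covariance matrix of `(V x, W x)`; call the interpolant
`C(t)`.

Following Royen, work with the half squares of the coordinates: their Laplace transform is
`det (1 + Λ C(t)) ^ (-1/2)`, where `Λ` is the diagonal matrix of the Laplace variables. Its
`t`-derivative is a sum over index sets `J` of `-(d/dt det C_J(t)) / 2 ≥ 0` times `∏ i ∈ J, λ i`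
times the third power of the Laplace transform. Flipping the sign of one block is a conjugation, so
the principal minor `det C_J(t)` is even in `t`, which makes it decreasing on `[0, 1]`. The third
power is the Laplace transform of a sum of three independent copies. In the variables `exp (-y²/2)`,
therefore, the expectation of a product of nonnegative increasing polynomials increases with `t`.
Polynomials that increase to a step function at `1/2` turn this into the statement about slabs.
-/

namespace GaussianCorrelation

open Matrix

section Determinants

variable {ι : Type*} [Fintype ι] [DecidableEq ι]

lemma det_one_add_smul_eq_prod_eigenvalues {K : Matrix ι ι ℝ} (hK : K.IsHermitian) (t : ℝ) :
    (1 + t • K).det = ∏ i, (1 + t * hK.eigenvalues i) := by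
  have hspec := hK.spectral_theorem
  rw [Unitary.conjStarAlgAut_apply] at hspec
  set Q := hK.eigenvectorUnitary
  have hQ : (Q : Matrix ι ι ℝ) * star (Q : Matrix ι ι ℝ) = 1 := Unitary.mul_star_self_of_mem Q.2
  have hdiag : diagonal (fun i ↦ 1 + t * hK.eigenvalues i) =
      1 + t • diagonal (RCLike.ofReal ∘ hK.eigenvalues : ι → ℝ) := by
    ext i j
    by_cases hij : i = j <;> simp [hij]
  have hconj : 1 + t • K =
      (Q : Matrix ι ι ℝ) * diagonal (fun i ↦ 1 + t * hK.eigenvalues i) *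
        star (Q : Matrix ι ι ℝ) := by
    rw [hdiag, mul_add, add_mul, mul_one, hQ, mul_smul_comm, smul_mul_assoc, ← hspec]
  rw [hconj, det_mul_right_comm, hQ, one_mul, det_diagonal]

lemma abs_eigenvalues_le_one {K : Matrix ι ι ℝ} (hK : K.IsHermitian)
    (hadd : (1 + K).PosSemidef) (hsub : (1 - K).PosSemidef) (i : ι) : |hK.eigenvalues i| ≤ 1 := by
  set x : ι → ℝ := ⇑(hK.eigenvectorBasis i)
  have hx : star x ⬝ᵥ x = 1 := by
    have h := inner_self_eq_one_of_norm_eq_one (𝕜 := ℝ) (hK.eigenvectorBasis.orthonormal.1 i)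
    rwa [EuclideanSpace.inner_eq_star_dotProduct, dotProduct_comm] at h
  have hν : hK.eigenvalues i = star x ⬝ᵥ K *ᵥ x := hK.eigenvalues_eq i
  have h₁ := hadd.dotProduct_mulVec_nonneg x
  have h₂ := hsub.dotProduct_mulVec_nonneg x
  rw [add_mulVec, one_mulVec, dotProduct_add, hx, ← hν] at h₁
  rw [sub_mulVec, one_mulVec, dotProduct_sub, hx, ← hν] at h₂
  exact abs_le.2 ⟨by linarith, by linarith⟩

-- The evenness gives `det (1 + t • K) ^ 2 = ∏ i, (1 - t ^ 2 * ν i ^ 2)` for the eigenvalues `ν` of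
-- `K`, and all these factors decrease in `t`.
lemma antitoneOn_det_one_add_smul {K : Matrix ι ι ℝ}
    (hadd : (1 + K).PosSemidef) (hsub : (1 - K).PosSemidef)
    (heven : Function.Even fun t : ℝ ↦ (1 + t • K).det) :
    AntitoneOn (fun t : ℝ ↦ (1 + t • K).det) (Icc 0 1) := by
  have hK : K.IsHermitian := by simpa using hadd.1.sub (isHermitian_one (n := ι) (α := ℝ))
  set ν := hK.eigenvalues
  have hdet (t : ℝ) : (1 + t • K).det = ∏ i, (1 + t * ν i) :=
    det_one_add_smul_eq_prod_eigenvalues hK t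
  have hν (i) : |ν i| ≤ 1 := abs_eigenvalues_le_one hK hadd hsub i
  have hsq (t : ℝ) : (1 + t • K).det ^ 2 = ∏ i, (1 - t ^ 2 * ν i ^ 2) := by
    have ht : (1 + (-t) • K).det = (1 + t • K).det := heven t
    rw [sq]
    nth_rw 2 [← ht]
    rw [hdet, hdet, ← Finset.prod_mul_distrib]
    exact Finset.prod_congr rfl fun i _ ↦ by ring
  intro s hs t ht hst
  have hnonneg : 0 ≤ (1 + s • K).det := by
    rw [hdet]
    exact Finset.prod_nonneg fun i _ ↦ by nlinarith [abs_le.1 (hν i), hs.1, hs.2]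
  refine le_of_sq_le_sq ?_ hnonneg
  rw [hsq, hsq]
  refine Finset.prod_le_prod (fun i _ ↦ ?_) (fun i _ ↦ ?_)
  · exact sub_nonneg.2 (mul_le_one₀ (pow_le_one₀ ht.1 ht.2) (sq_nonneg _)
      ((sq_le_one_iff_abs_le_one _).2 (hν i)))
  · gcongr
    exact hs.1

omit [Fintype ι] [DecidableEq ι] in
lemma posSemidef_add_smul {D K : Matrix ι ι ℝ}
    (hadd : (D + K).PosSemidef) (hsub : (D - K).PosSemidef) {t : ℝ} (ht : t ∈ Icc (-1) 1) :
    (D + t • K).PosSemidef := by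
  have hcomb : D + t • K = ((1 + t) / 2) • (D + K) + ((1 - t) / 2) • (D - K) := by module
  rw [hcomb]
  exact (hadd.smul (by linarith [ht.1])).add (hsub.smul (by linarith [ht.2]))

lemma det_add_smul_eq_zero {D K : Matrix ι ι ℝ}
    (hadd : (D + K).PosSemidef) (hsub : (D - K).PosSemidef) (hD : D.det = 0) (t : ℝ) :
    (D + t • K).det = 0 := by
  obtain ⟨x, hx, hDx⟩ := exists_mulVec_eq_zero_iff.2 hD
  have h₁ := hadd.dotProduct_mulVec_nonneg x
  have h₂ := hsub.dotProduct_mulVec_nonneg x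
  rw [add_mulVec, hDx, zero_add] at h₁
  rw [sub_mulVec, hDx, zero_sub, dotProduct_neg] at h₂
  have hKx : K *ᵥ x = 0 := by
    have hzero : star x ⬝ᵥ (D + K) *ᵥ x = 0 := by
      rw [add_mulVec, hDx, zero_add]
      linarith
    simpa [add_mulVec, hDx] using (hadd.dotProduct_mulVec_zero_iff x).1 hzero
  exact exists_mulVec_eq_zero_iff.1 ⟨x, hx, by simp [add_mulVec, smul_mulVec, hDx, hKx]⟩

open scoped MatrixOrder Matrix.Norms.L2Operator in
lemma exists_isUnit_eq_transpose_mul_self {M : Matrix ι ι ℝ} (hM : M.PosDef) :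
    ∃ B, IsUnit B ∧ M = Bᵀ * B := by
  simpa only [star_eq_conjTranspose, conjTranspose_eq_transpose_of_trivial] using
    CStarAlgebra.isStrictlyPositive_iff_eq_star_mul_self.1 hM.isStrictlyPositive

omit [DecidableEq ι] in
open scoped MatrixOrder Matrix.Norms.L2Operator in
lemma exists_eq_mul_transpose {M : Matrix ι ι ℝ} (hM : M.PosSemidef) :
    ∃ V : Matrix ι ι ℝ, M = V * Vᵀ := by
  classical
  simpa only [star_eq_conjTranspose, conjTranspose_eq_transpose_of_trivial] using
    CStarAlgebra.nonneg_iff_eq_mul_star_self.1 hM.nonneg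

lemma antitoneOn_det_add_smul_of_posDef {D K : Matrix ι ι ℝ} (hD : D.PosDef)
    (hadd : (D + K).PosSemidef) (hsub : (D - K).PosSemidef)
    (heven : Function.Even fun t : ℝ ↦ (D + t • K).det) :
    AntitoneOn (fun t : ℝ ↦ (D + t • K).det) (Icc 0 1) := by
  obtain ⟨B, hB, rfl⟩ := exists_isUnit_eq_transpose_mul_self hD
  obtain ⟨L, rfl⟩ : ∃ L, K = Bᵀ * L * B := by
    refine ⟨(Bᵀ)⁻¹ * K * B⁻¹, ?_⟩
    have hBdet : IsUnit B.det := (isUnit_iff_isUnit_det B).1 hB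
    have hBdet' : IsUnit Bᵀ.det := by rwa [det_transpose]
    rw [mul_assoc, mul_assoc _ B⁻¹, nonsing_inv_mul _ hBdet, mul_one, ← mul_assoc,
      mul_nonsing_inv _ hBdet', one_mul]
  have hfactor (t : ℝ) :
      (Bᵀ * B + t • (Bᵀ * L * B)).det = (Bᵀ * B).det * (1 + t • L).det := by
    have : Bᵀ * B + t • (Bᵀ * L * B) = Bᵀ * (1 + t • L) * B := by
      rw [mul_add, add_mul, mul_one, mul_smul_comm, smul_mul_assoc]
    rw [this, det_mul, det_mul, det_mul]
    ring
  have hanti : AntitoneOn (fun t : ℝ ↦ (1 + t • L).det) (Icc 0 1) := by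
    refine antitoneOn_det_one_add_smul ?_ ?_ fun t ↦ ?_
    · refine (IsUnit.posSemidef_star_left_conjugate_iff hB).1 ?_
      simpa [mul_add, add_mul, star_eq_conjTranspose] using hadd
    · refine (IsUnit.posSemidef_star_left_conjugate_iff hB).1 ?_
      simpa [mul_sub, sub_mul, star_eq_conjTranspose] using hsub
    · simpa only [hfactor, mul_right_inj' hD.det_pos.ne'] using heven t
  intro s hs t ht hst
  simp only [hfactor]
  exact mul_le_mul_of_nonneg_left (hanti hs ht hst) hD.det_pos.le

lemma antitoneOn_det_add_smul {D K : Matrix ι ι ℝ}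
    (hadd : (D + K).PosSemidef) (hsub : (D - K).PosSemidef)
    (heven : Function.Even fun t : ℝ ↦ (D + t • K).det) :
    AntitoneOn (fun t : ℝ ↦ (D + t • K).det) (Icc 0 1) := by
  have hD : D.PosSemidef := by
    simpa using posSemidef_add_smul hadd hsub (t := 0) (by simp)
  rcases eq_or_ne D.det 0 with hzero | hne
  · simp only [det_add_smul_eq_zero hadd hsub hzero]
    exact antitoneOn_const
  · exact antitoneOn_det_add_smul_of_posDef (hD.posDef_iff_det_ne_zero.2 hne) hadd hsub heven

/-- The principal minor of `C` with rows and columns in `J`. Indexed by `J`, these are the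
coefficients of the multi-affine polynomial `l ↦ det (1 + diagonal l * C)`. -/
def principalMinor {R : Type*} [CommRing R] (C : Matrix ι ι R) (J : Finset ι) : R :=
  (C.submatrix ((↑) : J → ι) (↑)).det

lemma det_one_add_diagonal_mul {R : Type*} [CommRing R] (l : ι → R) (C : Matrix ι ι R) :
    (1 + diagonal l * C).det = ∑ J : Finset ι, (∏ i ∈ J, l i) * principalMinor C J := by
  have hrows : 1 + diagonal l * C = (fun i ↦ l i • C.row i) + (1 : Matrix ι ι R).row := by
    ext i j
    simp [diagonal_mul, add_comm]
  calc (1 + diagonal l * C).det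
      = ∑ J : Finset ι, det (J.piecewise (fun i ↦ l i • C.row i) (1 : Matrix ι ι R).row) := by
        rw [hrows]
        exact detRowAlternating.toMultilinearMap.map_add_univ _ _
    _ = ∑ J : Finset ι, (∏ i ∈ J, l i) * principalMinor C J := by
        refine Finset.sum_congr rfl fun J _ ↦ ?_
        have hscale : J.piecewise (fun i ↦ l i • C.row i) (1 : Matrix ι ι R).row =
            J.piecewise (fun i ↦ l i • J.piecewise C.row (1 : Matrix ι ι R).row i)
              (J.piecewise C.row (1 : Matrix ι ι R).row) := by
          ext i
          by_cases hi : i ∈ J <;> simp [hi]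
        rw [hscale, principalMinor, ← det_piecewise_one_eq_submatrix_det, ← smul_eq_mul]
        exact detRowAlternating.toMultilinearMap.map_piecewise_smul _ _ _

omit [Fintype ι] in
lemma antitoneOn_principalMinor_add_smul {D K : Matrix ι ι ℝ}
    (hadd : (D + K).PosSemidef) (hsub : (D - K).PosSemidef) {J : Finset ι}
    (heven : Function.Even fun t : ℝ ↦ principalMinor (D + t • K) J) :
    AntitoneOn (fun t : ℝ ↦ principalMinor (D + t • K) J) (Icc 0 1) :=
  antitoneOn_det_add_smul (hadd.submatrix ((↑) : J → ι)) (hsub.submatrix ((↑) : J → ι)) heven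

lemma principalMinor_diagonal_mul_mul_diagonal {R : Type*} [CommRing R] {σ : ι → R}
    (hσ : ∀ i, σ i * σ i = 1) (C : Matrix ι ι R) (J : Finset ι) :
    principalMinor (diagonal σ * C * diagonal σ) J = principalMinor C J := by
  have hsub : (diagonal σ * C * diagonal σ).submatrix ((↑) : J → ι) (↑) =
      diagonal (fun i : J ↦ σ i) * C.submatrix (↑) (↑) * diagonal (fun i : J ↦ σ i) := by
    ext i j
    simp [diagonal_mul, mul_diagonal]
  rw [principalMinor, hsub, det_mul_right_comm, det_mul, diagonal_mul_diagonal]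
  simp [hσ, principalMinor]

end Determinants

section GaussianPi

variable {ι κ : Type*} [Fintype ι] [Fintype κ]

/-- The standard Gaussian measure on `κ → ℝ`, as a product measure. The function type carries the
linear algebra (matrices) and the splitting of coordinates; `stdGaussian_eq_map_gaussianPi`
identifies its image in Euclidean space with `stdGaussian`. -/
noncomputable def gaussianPi (κ : Type*) [Fintype κ] : Measure (κ → ℝ) :=
  Measure.pi fun _ ↦ ProbabilityTheory.gaussianReal 0 1

instance (κ : Type*) [Fintype κ] : IsProbabilityMeasure (gaussianPi κ) := by
  unfold gaussianPi
  infer_instance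

/-- The density of `gaussianPi κ` with respect to Lebesgue measure. It is written with `x ⬝ᵥ x` so
that a linear change of variables acts on the quadratic form. -/
noncomputable def gaussianPiPDFReal (x : κ → ℝ) : ℝ :=
  (√(2 * π))⁻¹ ^ Fintype.card κ * exp (-(x ⬝ᵥ x) / 2)

lemma gaussianPiPDFReal_eq_prod (x : κ → ℝ) :
    gaussianPiPDFReal x = ∏ i, ProbabilityTheory.gaussianPDFReal 0 1 (x i) := by
  simp only [ProbabilityTheory.gaussianPDFReal, Finset.prod_mul_distrib, gaussianPiPDFReal,
    ← Real.exp_sum]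
  simp [dotProduct, ← Finset.sum_div, sq]

lemma gaussianPiPDFReal_nonneg (x : κ → ℝ) : 0 ≤ gaussianPiPDFReal x := by
  unfold gaussianPiPDFReal
  positivity

@[fun_prop]
lemma measurable_gaussianPiPDFReal : Measurable (gaussianPiPDFReal (κ := κ)) := by
  unfold gaussianPiPDFReal dotProduct
  fun_prop

lemma integrable_gaussianPiPDFReal : Integrable (gaussianPiPDFReal (κ := κ)) := by
  simp only [funext gaussianPiPDFReal_eq_prod]
  exact Integrable.fintype_prod fun _ ↦ ProbabilityTheory.integrable_gaussianPDFReal 0 1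

lemma gaussianPi_eq_withDensity :
    gaussianPi κ = volume.withDensity fun x ↦ ENNReal.ofReal (gaussianPiPDFReal x) := by
  refine Measure.pi_eq fun s hs ↦ ?_
  rw [withDensity_apply _ (MeasurableSet.univ_pi hs), ← ofReal_integral_eq_lintegral_ofReal
    integrable_gaussianPiPDFReal.integrableOn
    (Filter.Eventually.of_forall gaussianPiPDFReal_nonneg),
    volume_pi, Measure.restrict_pi_pi]
  simp only [ProbabilityTheory.gaussianReal_apply_eq_integral 0 one_ne_zero,
    gaussianPiPDFReal_eq_prod]
  rw [integral_fintype_prod_eq_prod, ENNReal.ofReal_prod_of_nonneg]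
  exact fun _ _ ↦ integral_nonneg fun x ↦ ProbabilityTheory.gaussianPDFReal_nonneg 0 1 x

lemma integral_gaussianPi (f : (κ → ℝ) → ℝ) :
    ∫ x, f x ∂gaussianPi κ = ∫ x, gaussianPiPDFReal x * f x := by
  rw [gaussianPi_eq_withDensity, integral_withDensity_eq_integral_toReal_smul
    (measurable_gaussianPiPDFReal.ennreal_ofReal)
    (Filter.Eventually.of_forall fun _ ↦ ENNReal.ofReal_lt_top)]
  simp [ENNReal.toReal_ofReal (gaussianPiPDFReal_nonneg _)]

lemma integral_gaussianPiPDFReal : ∫ x : κ → ℝ, gaussianPiPDFReal x = 1 := by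
  simpa using (integral_gaussianPi (κ := κ) fun _ ↦ 1).symm

lemma integral_gaussianPiPDFReal_mulVec [DecidableEq κ] {B : Matrix κ κ ℝ} (hB : B.det ≠ 0) :
    ∫ x, gaussianPiPDFReal (B *ᵥ x) = |B.det|⁻¹ := by
  have hmeas : Measurable (toLin' B) := (LinearMap.continuous_of_finiteDimensional _).measurable
  calc ∫ x, gaussianPiPDFReal (B *ᵥ x)
      = ∫ y, gaussianPiPDFReal y ∂volume.map (toLin' B) :=
        (integral_map hmeas.aemeasurable measurable_gaussianPiPDFReal.aestronglyMeasurable).symm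
    _ = |B.det|⁻¹ := by
        rw [map_matrix_volume_pi_eq_smul_volume_pi hB, integral_smul_measure,
          integral_gaussianPiPDFReal]
        simp [abs_inv]

omit [Fintype κ] in
lemma posDef_one_add_transpose_mul_diagonal_mul [Finite κ] [DecidableEq ι] [DecidableEq κ]
    (V : Matrix ι κ ℝ) {l : ι → ℝ} (hl : ∀ i, 0 ≤ l i) : (1 + Vᵀ * diagonal l * V).PosDef :=
  PosDef.one.add_posSemidef ((PosSemidef.diagonal hl).conjTranspose_mul_mul_same V)

/-- The Laplace transform at `l ≥ 0` of the vector of half squares of a centred Gaussian vector with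
covariance matrix `C`, given by its closed form so that it makes sense for every matrix `C`. -/
noncomputable def laplaceHalfSq [DecidableEq ι] (C : Matrix ι ι ℝ) (l : ι → ℝ) : ℝ :=
  (√(1 + diagonal l * C).det)⁻¹

lemma integral_exp_neg_sum_mul_half_sq [DecidableEq ι] (V : Matrix ι κ ℝ) {l : ι → ℝ}
    (hl : ∀ i, 0 ≤ l i) :
    ∫ x, exp (-∑ i, l i * ((V *ᵥ x) i ^ 2 / 2)) ∂gaussianPi κ = laplaceHalfSq (V * Vᵀ) l := by
  classical
  obtain ⟨B, hB, hfactor⟩ :=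
    exists_isUnit_eq_transpose_mul_self (posDef_one_add_transpose_mul_diagonal_mul V hl)
  have hBdet : B.det ≠ 0 := ((isUnit_iff_isUnit_det _).1 hB).ne_zero
  have hdet : (1 + diagonal l * (V * Vᵀ)).det = B.det ^ 2 := by
    rw [← Matrix.mul_assoc, ← det_one_add_mul_comm, ← Matrix.mul_assoc, hfactor, det_mul,
      det_transpose, sq]
  have hquad (x : κ → ℝ) : B *ᵥ x ⬝ᵥ B *ᵥ x = x ⬝ᵥ x + ∑ i, l i * (V *ᵥ x) i ^ 2 := by
    calc B *ᵥ x ⬝ᵥ B *ᵥ x = x ⬝ᵥ (1 + Vᵀ * diagonal l * V) *ᵥ x := by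
          rw [hfactor, ← mulVec_mulVec, dotProduct_mulVec x, vecMul_transpose]
      _ = x ⬝ᵥ x + V *ᵥ x ⬝ᵥ diagonal l *ᵥ (V *ᵥ x) := by
          rw [add_mulVec, one_mulVec, dotProduct_add, ← mulVec_mulVec, ← mulVec_mulVec,
            dotProduct_mulVec x Vᵀ, vecMul_transpose]
      _ = x ⬝ᵥ x + ∑ i, l i * (V *ᵥ x) i ^ 2 := by
          simp only [dotProduct, mulVec_diagonal]
          exact congrArg _ (Finset.sum_congr rfl fun i _ ↦ by ring)
  have hpdf (x : κ → ℝ) : gaussianPiPDFReal x * exp (-∑ i, l i * ((V *ᵥ x) i ^ 2 / 2)) =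
      gaussianPiPDFReal (B *ᵥ x) := by
    simp only [gaussianPiPDFReal, hquad, mul_assoc, ← exp_add, ← mul_div_assoc, ← Finset.sum_div]
    ring_nf
  rw [integral_gaussianPi]
  simp only [hpdf]
  rw [integral_gaussianPiPDFReal_mulVec hBdet, laplaceHalfSq, hdet, sqrt_sq_eq_abs]

/-- The coordinates of `V *ᵥ x` passed through the bell curve `y ↦ exp (-y ^ 2 / 2)`: the joint
moments of this `[0, 1]`-valued vector under `gaussianPi` are values of `laplaceHalfSq`. -/
noncomputable def bellCurve (V : Matrix ι κ ℝ) (x : κ → ℝ) (i : ι) : ℝ :=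
  exp (-((V *ᵥ x) i ^ 2 / 2))

omit [Fintype ι] in
lemma bellCurve_mem_Icc (V : Matrix ι κ ℝ) (x : κ → ℝ) : bellCurve V x ∈ Icc 0 1 :=
  ⟨fun _ ↦ (exp_pos _).le, fun _ ↦ exp_le_one_iff.2 (neg_nonpos.2 (by positivity))⟩

omit [Fintype ι] in
@[fun_prop]
lemma measurable_bellCurve (V : Matrix ι κ ℝ) : Measurable (bellCurve V) := by
  unfold bellCurve mulVec dotProduct
  fun_prop

lemma integral_prod_bellCurve_pow [DecidableEq ι] (V : Matrix ι κ ℝ) (k : ι → ℕ) :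
    ∫ x, ∏ i, bellCurve V x i ^ k i ∂gaussianPi κ = laplaceHalfSq (V * Vᵀ) fun i ↦ k i := by
  rw [← integral_exp_neg_sum_mul_half_sq V fun i ↦ Nat.cast_nonneg (k i)]
  simp only [bellCurve, ← exp_nat_mul, ← exp_sum, mul_neg, Finset.sum_neg_distrib]

end GaussianPi

section MomentSums

variable {Ω ι : Type*} [MeasurableSpace Ω] [Fintype ι] {μ : Measure Ω} [IsProbabilityMeasure μ]
  {s : Ω → ι → ℝ} {S : Finset (ι → ℕ)} {a : (ι → ℕ) → ℝ}

lemma integral_sum_mul_prod_pow (hs : Measurable s) (hs01 : ∀ ω, s ω ∈ Icc 0 1) :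
    ∫ ω, ∑ k ∈ S, a k * ∏ i, s ω i ^ k i ∂μ = ∑ k ∈ S, a k * ∫ ω, ∏ i, s ω i ^ k i ∂μ := by
  have hint (k : ι → ℕ) : Integrable (fun ω ↦ ∏ i, s ω i ^ k i) μ := by
    refine Integrable.of_bound (C := 1) (by fun_prop) (Filter.Eventually.of_forall fun ω ↦ ?_)
    have hnonneg (i) : 0 ≤ s ω i ^ k i := pow_nonneg ((hs01 ω).1 i) _
    rw [norm_of_nonneg (Finset.prod_nonneg fun i _ ↦ hnonneg i)]
    exact Finset.prod_le_one (fun i _ ↦ hnonneg i)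
      fun i _ ↦ pow_le_one₀ ((hs01 ω).1 i) ((hs01 ω).2 i)
  rw [integral_finsetSum _ fun k _ ↦ (hint k).const_mul _]
  simp only [integral_const_mul]

-- The `m`-th powers of the moments of `s` are the moments of the product of `m` independent copies
-- of `s`, which again takes values in the cube.
lemma sum_mul_integral_prod_pow_pow_nonneg (hs : Measurable s) (hs01 : ∀ ω, s ω ∈ Icc 0 1)
    (ha : ∀ x ∈ Icc (0 : ι → ℝ) 1, 0 ≤ ∑ k ∈ S, a k * ∏ i, x i ^ k i) (m : ℕ) :
    0 ≤ ∑ k ∈ S, a k * (∫ ω, ∏ i, s ω i ^ k i ∂μ) ^ m := by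
  let copies (ω : Fin m → Ω) : ι → ℝ := ∏ r, s (ω r)
  have hcopies_meas : Measurable copies := by fun_prop
  have hcopies_mem (ω) : copies ω ∈ Icc 0 1 :=
    ⟨Finset.prod_nonneg fun r _ ↦ (hs01 (ω r)).1,
      Finset.prod_le_one (fun r _ ↦ (hs01 (ω r)).1) fun r _ ↦ (hs01 (ω r)).2⟩
  have hmoment (k : ι → ℕ) : ∫ ω, ∏ i, copies ω i ^ k i ∂Measure.pi (fun _ : Fin m ↦ μ) =
      (∫ ω, ∏ i, s ω i ^ k i ∂μ) ^ m := by
    have hprod (ω : Fin m → Ω) : ∏ i, copies ω i ^ k i = ∏ r, ∏ i, s (ω r) i ^ k i := by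
      simp only [copies, Finset.prod_apply, ← Finset.prod_pow]
      exact Finset.prod_comm
    simp only [hprod]
    rw [integral_fintype_prod_eq_pow fun ω ↦ ∏ i, s ω i ^ k i, Fintype.card_fin]
  simp only [← hmoment]
  rw [← integral_sum_mul_prod_pow hcopies_meas hcopies_mem]
  exact integral_nonneg fun ω ↦ ha _ (hcopies_mem ω)

end MomentSums

section Monotonicity

variable {ι : Type*} [Fintype ι] [DecidableEq ι] {S : Finset (ι → ℕ)} {a : (ι → ℕ) → ℝ}
  {C D K : Matrix ι ι ℝ}

lemma det_one_add_diagonal_mul_pos (hC : C.PosSemidef) {l : ι → ℝ} (hl : ∀ i, 0 ≤ l i) :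
    0 < (1 + diagonal l * C).det := by
  obtain ⟨V, rfl⟩ := exists_eq_mul_transpose hC
  rw [← Matrix.mul_assoc, ← det_one_add_mul_comm, ← Matrix.mul_assoc]
  exact (posDef_one_add_transpose_mul_diagonal_mul V hl).det_pos

lemma sum_mul_laplaceHalfSq_pow_nonneg (hC : C.PosSemidef)
    (ha : ∀ x ∈ Icc (0 : ι → ℝ) 1, 0 ≤ ∑ k ∈ S, a k * ∏ i, x i ^ k i) (m : ℕ) :
    0 ≤ ∑ k ∈ S, a k * laplaceHalfSq C (fun i ↦ k i) ^ m := by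
  obtain ⟨V, rfl⟩ := exists_eq_mul_transpose hC
  simp only [← integral_prod_bellCurve_pow]
  exact sum_mul_integral_prod_pow_pow_nonneg (measurable_bellCurve V) (bellCurve_mem_Icc V) ha m

omit [Fintype ι] in
lemma differentiable_principalMinor_add_smul (D K : Matrix ι ι ℝ) (J : Finset ι) :
    Differentiable ℝ fun t : ℝ ↦ principalMinor (D + t • K) J := by
  simp only [principalMinor, det_apply, submatrix_apply, Matrix.add_apply,
    Matrix.smul_apply]
  fun_prop

lemma hasDerivAt_laplaceHalfSq {l : ι → ℝ} {t : ℝ}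
    (hpos : 0 < (1 + diagonal l * (D + t • K)).det) :
    HasDerivAt (fun t : ℝ ↦ laplaceHalfSq (D + t • K) l)
      (∑ J, -deriv (fun t : ℝ ↦ principalMinor (D + t • K) J) t / 2 *
        ((∏ i ∈ J, l i) * laplaceHalfSq (D + t • K) l ^ 3)) t := by
  have hdet : HasDerivAt (fun t : ℝ ↦ (1 + diagonal l * (D + t • K)).det)
      (∑ J, (∏ i ∈ J, l i) * deriv (fun t : ℝ ↦ principalMinor (D + t • K) J) t) t := by
    simp only [det_one_add_diagonal_mul]
    exact HasDerivAt.fun_sum fun J _ ↦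
      (differentiable_principalMinor_add_smul D K J t).hasDerivAt.const_mul _
  refine ((hdet.sqrt hpos.ne').fun_inv (sqrt_pos.2 hpos).ne').congr_deriv ?_
  simp only [laplaceHalfSq]
  rw [neg_div, Finset.sum_div, Finset.sum_div, ← Finset.sum_neg_distrib]
  exact Finset.sum_congr rfl fun J _ ↦ by field_simp

lemma monotoneOn_sum_mul_laplaceHalfSq (hadd : (D + K).PosSemidef) (hsub : (D - K).PosSemidef)
    (heven : ∀ J, Function.Even fun t : ℝ ↦ principalMinor (D + t • K) J)
    (ha : ∀ J : Finset ι, ∀ x ∈ Icc (0 : ι → ℝ) 1,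
      0 ≤ ∑ k ∈ S, (∏ i ∈ J, (k i : ℝ)) * a k * ∏ i, x i ^ k i) :
    MonotoneOn (fun t : ℝ ↦ ∑ k ∈ S, a k * laplaceHalfSq (D + t • K) fun i ↦ k i) (Icc 0 1) := by
  have hpsd : ∀ t ∈ Icc (0 : ℝ) 1, (D + t • K).PosSemidef := fun t ht ↦
    posSemidef_add_smul hadd hsub ⟨by linarith [ht.1], ht.2⟩
  have hderiv : ∀ t ∈ Icc (0 : ℝ) 1, HasDerivAt
      (fun t : ℝ ↦ ∑ k ∈ S, a k * laplaceHalfSq (D + t • K) fun i ↦ k i)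
      (∑ J, -deriv (fun t : ℝ ↦ principalMinor (D + t • K) J) t / 2 *
        ∑ k ∈ S, (∏ i ∈ J, (k i : ℝ)) * a k * laplaceHalfSq (D + t • K) (fun i ↦ k i) ^ 3) t := by
    intro t ht
    refine (HasDerivAt.fun_sum fun k (_ : k ∈ S) ↦ (hasDerivAt_laplaceHalfSq
      (det_one_add_diagonal_mul_pos (hpsd t ht) fun i ↦ Nat.cast_nonneg (k i))).const_mul
      (a k)).congr_deriv ?_
    simp only [Finset.mul_sum]
    rw [Finset.sum_comm]
    exact Finset.sum_congr rfl fun k _ ↦ Finset.sum_congr rfl fun J _ ↦ by ring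
  refine monotoneOn_of_deriv_nonneg (convex_Icc 0 1)
    (fun t ht ↦ (hderiv t ht).continuousAt.continuousWithinAt)
    (fun t ht ↦ (hderiv t (interior_subset ht)).differentiableAt.differentiableWithinAt)
    fun t ht ↦ ?_
  rw [(hderiv t (interior_subset ht)).deriv]
  refine Finset.sum_nonneg fun J _ ↦ mul_nonneg (div_nonneg (neg_nonneg.2 ?_) zero_le_two)
    (sum_mul_laplaceHalfSq_pow_nonneg (hpsd t (interior_subset ht)) (ha J) 3)
  rw [← derivWithin_of_mem_nhds (mem_interior_iff_mem_nhds.1 ht)]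
  exact (antitoneOn_principalMinor_add_smul hadd hsub (heven J)).derivWithin_nonpos

end Monotonicity

section Polynomials

open Polynomial

variable {ι κ κ' : Type*} [Fintype ι] [DecidableEq ι] [Fintype κ] [Fintype κ'] {p : ι → ℝ[X]}

lemma sum_prod_natCast_mul_prod_coeff_mul_prod_pow (p : ι → ℝ[X]) (J : Finset ι) (x : ι → ℝ) :
    ∑ k ∈ Fintype.piFinset fun i ↦ (p i).support,
        (∏ i ∈ J, (k i : ℝ)) * (∏ i, (p i).coeff (k i)) * ∏ i, x i ^ k i =
      ∏ i, if i ∈ J then x i * (derivative (p i)).eval (x i) else (p i).eval (x i) := by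
  have hfactor (i : ι) : (if i ∈ J then x i * (derivative (p i)).eval (x i) else (p i).eval (x i)) =
      ∑ j ∈ (p i).support, (if i ∈ J then (j : ℝ) else 1) * (p i).coeff j * x i ^ j := by
    split_ifs
    · rw [derivative_eval, Polynomial.sum, Finset.mul_sum]
      refine Finset.sum_congr rfl fun j _ ↦ ?_
      rcases j with _ | j
      · simp
      · rw [Nat.add_sub_cancel, pow_succ]
        ring
    · simp only [one_mul, eval_eq_sum, Polynomial.sum]
  simp only [hfactor, Finset.prod_univ_sum, Finset.prod_mul_distrib, Finset.prod_ite_mem,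
    Finset.univ_inter]

lemma integral_prod_eval_bellCurve (V : Matrix ι κ ℝ) (p : ι → ℝ[X]) :
    ∫ x, ∏ i, (p i).eval (bellCurve V x i) ∂gaussianPi κ =
      ∑ k ∈ Fintype.piFinset fun i ↦ (p i).support,
        (∏ i, (p i).coeff (k i)) * laplaceHalfSq (V * Vᵀ) fun i ↦ k i := by
  have hexpand (x : ι → ℝ) := sum_prod_natCast_mul_prod_coeff_mul_prod_pow p ∅ x
  simp only [Finset.prod_empty, one_mul, Finset.notMem_empty, if_false] at hexpand
  simp only [← hexpand, ← integral_prod_bellCurve_pow]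
  exact integral_sum_mul_prod_pow (measurable_bellCurve V) (bellCurve_mem_Icc V)

lemma integral_prod_eval_bellCurve_le {V : Matrix ι κ ℝ} {W : Matrix ι κ' ℝ} {K : Matrix ι ι ℝ}
    (hadd : W * Wᵀ = V * Vᵀ + K) (hsub : (V * Vᵀ - K).PosSemidef)
    (heven : ∀ J, Function.Even fun t : ℝ ↦ principalMinor (V * Vᵀ + t • K) J)
    (hp : ∀ i, ∀ x ∈ Icc (0 : ℝ) 1, 0 ≤ (p i).eval x)
    (hp' : ∀ i, ∀ x ∈ Icc (0 : ℝ) 1, 0 ≤ (derivative (p i)).eval x) :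
    ∫ x, ∏ i, (p i).eval (bellCurve V x i) ∂gaussianPi κ ≤
      ∫ x, ∏ i, (p i).eval (bellCurve W x i) ∂gaussianPi κ' := by
  have hpsd : (V * Vᵀ + K).PosSemidef := hadd ▸ posSemidef_self_mul_conjTranspose W
  have hcoeff (J : Finset ι) (x) (hx : x ∈ Icc (0 : ι → ℝ) 1) :
      0 ≤ ∑ k ∈ Fintype.piFinset fun i ↦ (p i).support,
        (∏ i ∈ J, (k i : ℝ)) * (∏ i, (p i).coeff (k i)) * ∏ i, x i ^ k i := by
    rw [sum_prod_natCast_mul_prod_coeff_mul_prod_pow]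
    refine Finset.prod_nonneg fun i _ ↦ ?_
    have hxi : x i ∈ Icc 0 1 := ⟨hx.1 i, hx.2 i⟩
    split_ifs
    · exact mul_nonneg hxi.1 (hp' i _ hxi)
    · exact hp i _ hxi
  have hmono := monotoneOn_sum_mul_laplaceHalfSq hpsd hsub heven hcoeff
    (left_mem_Icc.2 zero_le_one) (right_mem_Icc.2 zero_le_one) zero_le_one
  simp only [zero_smul, add_zero, one_smul] at hmono
  rwa [integral_prod_eval_bellCurve, integral_prod_eval_bellCurve, hadd]

end Polynomials

section TwoBlocks

open Polynomial

variable {ι ι' κ κ' : Type*} [Fintype κ] [Fintype κ']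

lemma principalMinor_fromBlocks_neg [Finite ι] [Finite ι'] [DecidableEq ι] [DecidableEq ι']
    {R : Type*} [CommRing R] (A : Matrix ι ι R) (B : Matrix ι ι' R) (C : Matrix ι' ι R)
    (D : Matrix ι' ι' R) (J : Finset (ι ⊕ ι')) :
    principalMinor (fromBlocks A (-B) (-C) D) J = principalMinor (fromBlocks A B C D) J := by
  cases nonempty_fintype ι
  cases nonempty_fintype ι'
  let σ : ι ⊕ ι' → R := Sum.elim 1 (-1)
  have hσ (i) : σ i * σ i = 1 := by cases i <;> simp [σ]
  have hconj : fromBlocks A (-B) (-C) D = diagonal σ * fromBlocks A B C D * diagonal σ := by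
    ext (i | i) (j | j) <;> simp [σ, diagonal_mul, mul_diagonal]
  rw [hconj, principalMinor_diagonal_mul_mul_diagonal hσ]

lemma integral_gaussianPi_sum (f : (κ → ℝ) → ℝ) (g : (κ' → ℝ) → ℝ) :
    ∫ x, f (x ∘ Sum.inl) * g (x ∘ Sum.inr) ∂gaussianPi (κ ⊕ κ') =
      (∫ x, f x ∂gaussianPi κ) * ∫ x, g x ∂gaussianPi κ' := by
  rw [← integral_prod_mul]
  exact (measurePreserving_sumPiEquivProdPi fun _ : κ ⊕ κ' ↦
    ProbabilityTheory.gaussianReal 0 1).integral_comp' fun z ↦ f z.1 * g z.2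

lemma integral_prod_eval_bellCurve_mul_le [Fintype ι] [Fintype ι'] (V : Matrix ι κ ℝ)
    (W : Matrix ι' κ ℝ) {p : ι ⊕ ι' → ℝ[X]}
    (hp : ∀ i, ∀ x ∈ Icc (0 : ℝ) 1, 0 ≤ (p i).eval x)
    (hp' : ∀ i, ∀ x ∈ Icc (0 : ℝ) 1, 0 ≤ (derivative (p i)).eval x) :
    (∫ x, ∏ i, (p (.inl i)).eval (bellCurve V x i) ∂gaussianPi κ) *
        ∫ x, ∏ i, (p (.inr i)).eval (bellCurve W x i) ∂gaussianPi κ ≤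
      ∫ x, ∏ i, (p i).eval (bellCurve (fromRows V W) x i) ∂gaussianPi κ := by
  classical
  have hgram : fromBlocks V 0 0 W * (fromBlocks V 0 0 W)ᵀ =
      fromBlocks (V * Vᵀ) 0 0 (W * Wᵀ) := by
    simp [fromBlocks_transpose, fromBlocks_multiply]
  have h := integral_prod_eval_bellCurve_le (V := fromBlocks V 0 0 W) (W := fromRows V W)
    (K := fromBlocks 0 (V * Wᵀ) (W * Vᵀ) 0) ?_ ?_ ?_ hp hp'
  · rw [← integral_gaussianPi_sum]
    simpa [Fintype.prod_sum_type, bellCurve, fromBlocks_mulVec] using h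
  · rw [hgram, transpose_fromRows, fromRows_mul_fromCols, fromBlocks_add]
    simp
  · convert posSemidef_self_mul_conjTranspose (fromRows V (-W))
    rw [hgram, conjTranspose_fromRows_eq_fromCols_conjTranspose, fromRows_mul_fromCols,
      sub_eq_add_neg, fromBlocks_neg, fromBlocks_add]
    simp
  · intro J t
    simp only [hgram, neg_smul, fromBlocks_smul, fromBlocks_neg, fromBlocks_add, smul_zero,
      neg_zero, zero_add, add_zero]
    exact principalMinor_fromBlocks_neg ..

end TwoBlocks

section StepApproximation

open Polynomial Filter Topology

/-- A sequence of polynomials increasing on `[0, 1]` and converging there to the indicator function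
of `[1 / 2, 1]`. With the exponent `k * 2 ^ k`, the product `(k * 2 ^ k) * x ^ k` tends to infinity
for `1 / 2 ≤ x` and to zero for `x < 1 / 2`. -/
noncomputable def stepPoly (k : ℕ) : ℝ[X] := 1 - (1 - X ^ k) ^ (k * 2 ^ k)

lemma eval_stepPoly (k : ℕ) (x : ℝ) : (stepPoly k).eval x = 1 - (1 - x ^ k) ^ (k * 2 ^ k) := by
  simp [stepPoly]

lemma one_sub_pow_mem_Icc {x : ℝ} (hx : x ∈ Icc 0 1) (k : ℕ) : 1 - x ^ k ∈ Icc 0 1 :=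
  ⟨sub_nonneg.2 (pow_le_one₀ hx.1 hx.2), sub_le_self _ (pow_nonneg hx.1 k)⟩

lemma eval_stepPoly_mem_Icc {x : ℝ} (hx : x ∈ Icc 0 1) (k : ℕ) :
    (stepPoly k).eval x ∈ Icc 0 1 := by
  have h := one_sub_pow_mem_Icc hx k
  rw [eval_stepPoly]
  exact one_sub_pow_mem_Icc h _

lemma eval_derivative_stepPoly_nonneg {x : ℝ} (hx : x ∈ Icc 0 1) (k : ℕ) :
    0 ≤ (derivative (stepPoly k)).eval x := by
  have h₀ := hx.1
  have h₁ := (one_sub_pow_mem_Icc hx k).1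
  have hderiv : (derivative (stepPoly k)).eval x =
      ↑(k * 2 ^ k) * (1 - x ^ k) ^ (k * 2 ^ k - 1) * (k * x ^ (k - 1)) := by
    simp [stepPoly, derivative_pow]
  rw [hderiv]
  positivity

lemma tendsto_eval_stepPoly_of_one_half_le {x : ℝ} (hx : x ∈ Icc (1 / 2) 1) :
    Tendsto (fun k ↦ (stepPoly k).eval x) atTop (𝓝 1) := by
  have hx' : x ∈ Icc (0 : ℝ) 1 := ⟨by linarith [hx.1], hx.2⟩
  have hle (k : ℕ) : (1 - x ^ k) ^ (k * 2 ^ k) ≤ exp (-k) := by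
    have hone : (1 : ℝ) ≤ (2 * x) ^ k := one_le_pow₀ (by linarith [hx.1])
    calc (1 - x ^ k) ^ (k * 2 ^ k) ≤ exp (-x ^ k) ^ (k * 2 ^ k) :=
          pow_le_pow_left₀ (one_sub_pow_mem_Icc hx' k).1 (one_sub_le_exp_neg _) _
      _ = exp (-(k * (2 * x) ^ k)) := by
          rw [← exp_nat_mul, mul_pow]
          push_cast
          ring_nf
      _ ≤ exp (-k) := exp_le_exp.2 (neg_le_neg (le_mul_of_one_le_right k.cast_nonneg hone))
  have hlim : Tendsto (fun k : ℕ ↦ (1 - x ^ k) ^ (k * 2 ^ k)) atTop (𝓝 0) :=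
    squeeze_zero (fun k ↦ pow_nonneg (one_sub_pow_mem_Icc hx' k).1 _) hle
      (tendsto_exp_neg_atTop_nhds_zero.comp tendsto_natCast_atTop_atTop)
  simpa only [eval_stepPoly, sub_zero] using hlim.const_sub 1

lemma tendsto_eval_stepPoly_of_lt_one_half {x : ℝ} (hx : x ∈ Ico 0 (1 / 2)) :
    Tendsto (fun k ↦ (stepPoly k).eval x) atTop (𝓝 0) := by
  have hx' : x ∈ Icc (0 : ℝ) 1 := ⟨hx.1, by linarith [hx.2]⟩
  have hle (k : ℕ) : (stepPoly k).eval x ≤ k * (2 * x) ^ k := by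
    have hbernoulli := one_add_mul_le_pow (a := -x ^ k)
      (by linarith [(one_sub_pow_mem_Icc hx' k).1]) (k * 2 ^ k)
    rw [← sub_eq_add_neg] at hbernoulli
    push_cast at hbernoulli
    rw [eval_stepPoly, mul_pow]
    linarith
  exact squeeze_zero (fun k ↦ (eval_stepPoly_mem_Icc hx' k).1) hle
    (tendsto_self_mul_const_pow_of_lt_one (by linarith [hx.1]) (by linarith [hx.2]))

lemma tendsto_eval_stepPoly {x : ℝ} (hx : x ∈ Icc 0 1) :
    Tendsto (fun k ↦ (stepPoly k).eval x) atTop (𝓝 (if 1 / 2 ≤ x then 1 else 0)) := by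
  split_ifs with h
  · exact tendsto_eval_stepPoly_of_one_half_le ⟨h, hx.2⟩
  · exact tendsto_eval_stepPoly_of_lt_one_half ⟨hx.1, not_le.1 h⟩

lemma tendsto_integral_prod_eval_stepPoly {Ω ι : Type*} [MeasurableSpace Ω] [Fintype ι]
    {μ : Measure Ω} [IsProbabilityMeasure μ] {s : Ω → ι → ℝ} (hs : Measurable s)
    (hs01 : ∀ ω, s ω ∈ Icc 0 1) :
    Tendsto (fun k ↦ ∫ ω, ∏ i, (stepPoly k).eval (s ω i) ∂μ) atTop
      (𝓝 (μ.real {ω | ∀ i, 1 / 2 ≤ s ω i})) := by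
  have hmeas : MeasurableSet {ω | ∀ i, 1 / 2 ≤ s ω i} := by
    simp only [ofPred_forall]
    exact MeasurableSet.iInter fun i ↦ measurableSet_le measurable_const (by fun_prop)
  have hmem (k : ℕ) (ω : Ω) (i : ι) : (stepPoly k).eval (s ω i) ∈ Icc 0 1 :=
    eval_stepPoly_mem_Icc ⟨(hs01 ω).1 i, (hs01 ω).2 i⟩ k
  rw [← integral_indicator_one hmeas]
  refine tendsto_integral_of_dominated_convergence (fun _ ↦ 1) (fun k ↦ ?_) (integrable_const _)
    (fun k ↦ Eventually.of_forall fun ω ↦ ?_) (Eventually.of_forall fun ω ↦ ?_)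
  · exact (Finset.measurable_prod _ fun i _ ↦
      (stepPoly k).continuous.measurable.comp (by fun_prop)).aestronglyMeasurable
  · rw [norm_of_nonneg (Finset.prod_nonneg fun i _ ↦ (hmem k ω i).1)]
    exact Finset.prod_le_one (fun i _ ↦ (hmem k ω i).1) fun i _ ↦ (hmem k ω i).2
  · have hlim := tendsto_finsetProd Finset.univ fun i _ ↦
      tendsto_eval_stepPoly (x := s ω i) ⟨(hs01 ω).1 i, (hs01 ω).2 i⟩
    simpa [Finset.prod_boole, indicator_apply] using hlim

variable {ι ι' κ : Type*} [Fintype κ]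

lemma one_half_le_bellCurve_smul_iff (V : Matrix ι κ ℝ) (x : κ → ℝ) (i : ι) :
    1 / 2 ≤ bellCurve (√(2 * log 2) • V) x i ↔ |(V *ᵥ x) i| ≤ 1 := by
  have hlog : 0 < log 2 := log_pos one_lt_two
  have hhalf : (1 / 2 : ℝ) = exp (-log 2) := by rw [exp_neg, exp_log two_pos, one_div]
  have hsq : ((√(2 * log 2) • V) *ᵥ x) i ^ 2 / 2 = log 2 * (V *ᵥ x) i ^ 2 := by
    rw [smul_mulVec, Pi.smul_apply, smul_eq_mul, mul_pow, sq_sqrt (by positivity)]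
    ring
  rw [bellCurve, hhalf, exp_le_exp, neg_le_neg_iff, hsq, mul_le_iff_le_one_right hlog,
    sq_le_one_iff_abs_le_one]

lemma tendsto_integral_prod_eval_stepPoly_bellCurve [Fintype ι] (V : Matrix ι κ ℝ) :
    Tendsto (fun k ↦ ∫ x, ∏ i, (stepPoly k).eval (bellCurve (√(2 * log 2) • V) x i) ∂gaussianPi κ)
      atTop (𝓝 ((gaussianPi κ).real {x | ∀ i, |(V *ᵥ x) i| ≤ 1})) := by
  simp only [← one_half_le_bellCurve_smul_iff]
  exact tendsto_integral_prod_eval_stepPoly (measurable_bellCurve _) (bellCurve_mem_Icc _)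

lemma gaussianPi_slab_mul_slab_le [Finite ι] [Finite ι'] (V : Matrix ι κ ℝ)
    (W : Matrix ι' κ ℝ) :
    (gaussianPi κ).real {x | ∀ i, |(V *ᵥ x) i| ≤ 1} *
        (gaussianPi κ).real {x | ∀ i, |(W *ᵥ x) i| ≤ 1} ≤
      (gaussianPi κ).real {x | ∀ i, |(fromRows V W *ᵥ x) i| ≤ 1} := by
  cases nonempty_fintype ι
  cases nonempty_fintype ι'
  refine le_of_tendsto_of_tendsto' ((tendsto_integral_prod_eval_stepPoly_bellCurve V).mul
    (tendsto_integral_prod_eval_stepPoly_bellCurve W))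
    (tendsto_integral_prod_eval_stepPoly_bellCurve (fromRows V W)) fun k ↦ ?_
  have hsmul : √(2 * log 2) • fromRows V W = fromRows (√(2 * log 2) • V) (√(2 * log 2) • W) := by
    ext (i | i) j <;> rfl
  rw [hsmul]
  exact integral_prod_eval_bellCurve_mul_le _ _
    (fun _ _ hx ↦ (eval_stepPoly_mem_Icc hx k).1) fun _ _ hx ↦ eval_derivative_stepPoly_nonneg hx k

end StepApproximation

section Polars

open Filter Topology

variable {E : Type*} [AddCommGroup E] [Module ℝ E] [TopologicalSpace E]

lemma isClosed_polar (F : Set (StrongDual ℝ E)) : IsClosed ((topDualPairing ℝ E).polar F) := by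
  rw [LinearMap.polar_eq_iInter]
  exact isClosed_biInter fun φ _ ↦ isClosed_le φ.continuous.norm continuous_const

lemma polar_polar_eq [IsTopologicalAddGroup E] [ContinuousSMul ℝ E] [LocallyConvexSpace ℝ E]
    {A : Set E} (hA : IsClosed A) (hconv : Convex ℝ A) (hsymm : ∀ x ∈ A, -x ∈ A)
    (hne : A.Nonempty) :
    (topDualPairing ℝ E).polar ((topDualPairing ℝ E).flip.polar A) = A := by
  refine ((topDualPairing ℝ E).flip.subset_bipolar A).antisymm' fun x hx ↦ ?_
  by_contra hxA
  obtain ⟨a, ha⟩ := hne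
  have hzero : (0 : E) ∈ A := by
    simpa using hconv ha (hsymm a ha) one_half_pos.le one_half_pos.le (add_halves (1 : ℝ))
  obtain ⟨φ, u, hφA, hφx⟩ := geometric_hahn_banach_closed_point hconv hA hxA
  have hu : 0 < u := by simpa using hφA 0 hzero
  have hmem : u⁻¹ • φ ∈ (topDualPairing ℝ E).flip.polar A := fun y hy ↦ by
    have hneg := hφA (-y) (hsymm y hy)
    rw [map_neg] at hneg
    have habs : |φ y| ≤ u := abs_le.2 ⟨by linarith, (hφA y hy).le⟩
    simpa [abs_of_pos hu, inv_mul_le_one₀ hu] using habs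
  have hle : |φ x| ≤ u := by
    simpa [abs_of_pos hu, inv_mul_le_one₀ hu] using hx _ hmem
  exact absurd ((le_abs_self _).trans hle) (not_le.2 hφx)

lemma exists_countable_polar_eq [SecondCountableTopology E] (F : Set (StrongDual ℝ E)) :
    ∃ T ⊆ F, T.Countable ∧ (topDualPairing ℝ E).polar T = (topDualPairing ℝ E).polar F := by
  obtain ⟨T, hTF, hT, hunion⟩ := TopologicalSpace.isOpen_biUnion_countable F
    (fun φ ↦ {x | ‖φ x‖ ≤ 1}ᶜ) fun φ _ ↦
      (isClosed_le φ.continuous.norm continuous_const).isOpen_compl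
  refine ⟨T, hTF, hT, ?_⟩
  simpa [LinearMap.polar_eq_iInter, compl_iInter] using congrArg Compl.compl hunion

lemma exists_seq_polar_range_eq [IsTopologicalAddGroup E] [ContinuousSMul ℝ E]
    [LocallyConvexSpace ℝ E] [SecondCountableTopology E] {A : Set E}
    (hA : IsClosed A) (hconv : Convex ℝ A) (hsymm : ∀ x ∈ A, -x ∈ A) (hne : A.Nonempty) :
    ∃ φ : ℕ → StrongDual ℝ E, (topDualPairing ℝ E).polar (range φ) = A := by
  obtain ⟨T, -, hT, hpolar⟩ :=
    exists_countable_polar_eq ((topDualPairing ℝ E).flip.polar A)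
  obtain ⟨φ, hφ⟩ := (hT.insert 0).exists_eq_range (insert_nonempty 0 T)
  refine ⟨φ, ?_⟩
  rw [← hφ, insert_eq, LinearMap.polar_union, LinearMap.polar_zero, univ_inter, hpolar,
    polar_polar_eq hA hconv hsymm hne]

lemma tendsto_measureReal_polar [MeasurableSpace E] [OpensMeasurableSpace E] (μ : Measure E)
    [IsFiniteMeasure μ] {F : ℕ → Set (StrongDual ℝ E)} (hF : Monotone F) :
    Tendsto (fun N ↦ μ.real ((topDualPairing ℝ E).polar (F N))) atTop
      (𝓝 (μ.real ((topDualPairing ℝ E).polar (⋃ N, F N)))) := by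
  rw [LinearMap.polar_iUnion]
  exact (ENNReal.tendsto_toReal (measure_ne_top _ _)).comp <| tendsto_measure_iInter_atTop
    (fun N ↦ (isClosed_polar (F N)).measurableSet.nullMeasurableSet)
    ((topDualPairing ℝ E).polar_antitone.comp_monotone hF) ⟨0, measure_ne_top _ _⟩

end Polars

section StdGaussian

open Filter

lemma stdGaussian_eq_map_gaussianPi (n : ℕ) :
    stdGaussian n = (gaussianPi (Fin n)).map (WithLp.toLp 2) := by
  have hpdf (x : Fin n → ℝ) : (2 * π) ^ (-(n : ℝ) / 2) *
      exp (-‖(WithLp.toLp 2 x : EuclideanSpace ℝ (Fin n))‖ ^ 2 / 2) = gaussianPiPDFReal x := by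
    have hconst : (2 * π) ^ (-(n : ℝ) / 2) = (√(2 * π))⁻¹ ^ n := by
      rw [sqrt_eq_rpow, ← rpow_neg two_pi_pos.le, ← rpow_natCast, ← rpow_mul two_pi_pos.le]
      ring_nf
    rw [hconst, gaussianPiPDFReal, Fintype.card_fin, EuclideanSpace.real_norm_sq_eq]
    simp only [dotProduct, sq]
  have hvol := PiLp.volume_preserving_toLp (Fin n)
  ext s hs
  rw [Measure.map_apply hvol.measurable hs, stdGaussian, gaussianPi_eq_withDensity,
    withDensity_apply _ hs, withDensity_apply _ (hvol.measurable hs),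
    ← hvol.setLIntegral_comp_preimage hs (by fun_prop)]
  simp only [hpdf]

instance (n : ℕ) : IsProbabilityMeasure (stdGaussian n) := by
  rw [stdGaussian_eq_map_gaussianPi]
  exact Measure.isProbabilityMeasure_map
    (PiLp.volume_preserving_toLp (Fin n)).measurable.aemeasurable

lemma exists_matrix_preimage_polar_eq {κ : Type*} [Fintype κ]
    (F : Set (StrongDual ℝ (EuclideanSpace ℝ κ))) :
    ∃ V : Matrix F κ ℝ, WithLp.toLp 2 ⁻¹' (topDualPairing ℝ (EuclideanSpace ℝ κ)).polar F =
      {x | ∀ i, |(V *ᵥ x) i| ≤ 1} := by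
  classical
  refine ⟨LinearMap.toMatrix' (LinearMap.pi fun φ : F ↦
    (φ : EuclideanSpace ℝ κ →ₗ[ℝ] ℝ) ∘ₗ (WithLp.linearEquiv 2 ℝ (κ → ℝ)).symm), ?_⟩
  ext x
  simp [LinearMap.toMatrix'_mulVec, LinearMap.polar_mem_iff]

variable {n : ℕ}

lemma stdGaussian_polar_mul_polar_le {F G : Set (StrongDual ℝ (EuclideanSpace ℝ (Fin n)))}
    (hF : F.Finite) (hG : G.Finite) :
    (stdGaussian n).real ((topDualPairing ℝ _).polar F) *
        (stdGaussian n).real ((topDualPairing ℝ _).polar G) ≤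
      (stdGaussian n).real ((topDualPairing ℝ _).polar (F ∪ G)) := by
  have := hF.fintype
  have := hG.fintype
  obtain ⟨V, hV⟩ := exists_matrix_preimage_polar_eq F
  obtain ⟨W, hW⟩ := exists_matrix_preimage_polar_eq G
  have hVW : WithLp.toLp 2 ⁻¹' (topDualPairing ℝ _).polar (F ∪ G) =
      {x | ∀ i, |(fromRows V W *ᵥ x) i| ≤ 1} := by
    rw [LinearMap.polar_union, preimage_inter, hV, hW]
    ext x
    simp [fromRows_mulVec]
  have hmeas := (PiLp.volume_preserving_toLp (Fin n)).measurable
  simp only [stdGaussian_eq_map_gaussianPi,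
    map_measureReal_apply hmeas (isClosed_polar _).measurableSet, hV, hW, hVW]
  exact gaussianPi_slab_mul_slab_le V W

lemma stdGaussian_mul_le_inter_of_isClosed {A B : Set (EuclideanSpace ℝ (Fin n))}
    (hA : IsClosed A) (hAconv : Convex ℝ A) (hAsymm : ∀ x ∈ A, -x ∈ A)
    (hB : IsClosed B) (hBconv : Convex ℝ B) (hBsymm : ∀ x ∈ B, -x ∈ B) :
    stdGaussian n A * stdGaussian n B ≤ stdGaussian n (A ∩ B) := by
  rcases A.eq_empty_or_nonempty with rfl | hAne
  · simp
  rcases B.eq_empty_or_nonempty with rfl | hBne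
  · simp
  obtain ⟨φ, rfl⟩ := exists_seq_polar_range_eq hA hAconv hAsymm hAne
  obtain ⟨ψ, rfl⟩ := exists_seq_polar_range_eq hB hBconv hBsymm hBne
  have hmono (χ : ℕ → StrongDual ℝ (EuclideanSpace ℝ (Fin n))) : Monotone fun N ↦ χ '' Iic N :=
    fun _ _ h ↦ image_mono (Iic_subset_Iic.2 h)
  have hunion (χ : ℕ → StrongDual ℝ (EuclideanSpace ℝ (Fin n))) : ⋃ N, χ '' Iic N = range χ := by
    rw [← image_iUnion, iUnion_Iic, image_univ]
  have hφ := tendsto_measureReal_polar (stdGaussian n) (hmono φ)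
  have hψ := tendsto_measureReal_polar (stdGaussian n) (hmono ψ)
  have hφψ := tendsto_measureReal_polar (stdGaussian n) ((hmono φ).sup (hmono ψ))
  simp only [Pi.sup_apply, sup_eq_union, iUnion_union_distrib, hunion] at hφ hψ hφψ
  rw [← LinearMap.polar_union, ← ENNReal.toReal_le_toReal (by finiteness) (by finiteness),
    ENNReal.toReal_mul]
  exact le_of_tendsto_of_tendsto' (hφ.mul hψ) hφψ fun N ↦
    stdGaussian_polar_mul_polar_le ((finite_Iic N).image φ) ((finite_Iic N).image ψ)

lemma closure_ae_eq_stdGaussian {A : Set (EuclideanSpace ℝ (Fin n))} (hA : Convex ℝ A) :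
    closure A =ᵐ[stdGaussian n] A := by
  have hfrontier : stdGaussian n (frontier A) = 0 :=
    withDensity_absolutelyContinuous _ _ (hA.addHaar_frontier volume)
  refine (ae_le_set.2 ?_).antisymm subset_closure.eventuallyLE
  exact measure_mono_null (sdiff_subset_sdiff_right interior_subset) hfrontier

lemma stdGaussian_mul_le_inter {A B : Set (EuclideanSpace ℝ (Fin n))}
    (hA : Convex ℝ A) (hAsymm : ∀ x ∈ A, -x ∈ A) (hB : Convex ℝ B) (hBsymm : ∀ x ∈ B, -x ∈ B) :
    stdGaussian n A * stdGaussian n B ≤ stdGaussian n (A ∩ B) := by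
  have hsymm {C : Set (EuclideanSpace ℝ (Fin n))} (hC : ∀ x ∈ C, -x ∈ C) :
      ∀ x ∈ closure C, -x ∈ closure C :=
    fun _ hx ↦ map_mem_closure continuous_neg hx hC
  have h := stdGaussian_mul_le_inter_of_isClosed isClosed_closure hA.closure (hsymm hAsymm)
    isClosed_closure hB.closure (hsymm hBsymm)
  have hAae := closure_ae_eq_stdGaussian hA
  have hBae := closure_ae_eq_stdGaussian hB
  rwa [measure_congr hAae, measure_congr hBae, measure_congr (hAae.inter hBae)] at h

end StdGaussian

end GaussianCorrelation

theorem stmt10_general {n : ℕ} {ι : Type*} [Fintype ι] (A : ι → Set (EuclideanSpace ℝ (Fin n)))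
    (hAconv : ∀ j, Convex ℝ (A j)) (hAsymm : ∀ j, ∀ x ∈ A j, -x ∈ A j) :
    ∏ j, stdGaussian n (A j) ≤ stdGaussian n (⋂ j, A j) := by
  suffices h : ∀ s : Finset ι, ∏ j ∈ s, stdGaussian n (A j) ≤ stdGaussian n (⋂ j ∈ s, A j) by
    simpa using h Finset.univ
  intro s
  induction s using Finset.cons_induction with
  | empty => simp
  | cons j s hj ih =>
    have hsymm : ∀ x ∈ ⋂ i ∈ s, A i, -x ∈ ⋂ i ∈ s, A i := fun x hx ↦
      mem_iInter₂.2 fun i hi ↦ hAsymm i x (mem_iInter₂.1 hx i hi)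
    calc ∏ i ∈ s.cons j hj, stdGaussian n (A i)
        = stdGaussian n (A j) * ∏ i ∈ s, stdGaussian n (A i) := Finset.prod_cons hj
      _ ≤ stdGaussian n (A j) * stdGaussian n (⋂ i ∈ s, A i) := by gcongr
      _ ≤ stdGaussian n (A j ∩ ⋂ i ∈ s, A i) :=
          GaussianCorrelation.stdGaussian_mul_le_inter (hAconv j) (hAsymm j)
            (convex_iInter₂ fun i _ ↦ hAconv i) hsymm
      _ = stdGaussian n (⋂ i ∈ s.cons j hj, A i) := by
          simp only [Finset.mem_cons, iInter_iInter_eq_or_left]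

/-- The Gaussian correlation inequality for finitely many symmetric convex sets. -/
theorem stmt10 (n m : ℕ) (A : Fin m → Set (EuclideanSpace ℝ (Fin n)))
    (hA : ∀ j, MeasurableSet (A j)) (hAconv : ∀ j, Convex ℝ (A j))
    (hAsymm : ∀ j, ∀ x ∈ A j, -x ∈ A j) :
    ∏ j : Fin m, stdGaussian n (A j) ≤ stdGaussian n (⋂ j, A j) :=
  stmt10_general A hAconv hAsymm
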